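/- Let 0 < p < 1 and let |Φ⁺⟩ = (|00⟩ + |11⟩)/√2. Then the fidelity of ρ(Φ⁺, Λ_p) satisfies F(ρ(Φ⁺, Λ_p)) ≤ 1/2 if and only if p ≥ 2(√2 − 1). -/

import Mathlib

open Matrix Complex
open scoped Kronecker ComplexOrder

/-- Index type for two qubits: the product basis of ℂ² ⊗ ℂ². -/
abbrev Q2 := Fin 2 × Fin 2

/-- Kraus operator `M₀` of the amplitude damping channel. -/
noncomputable def M0 (p : ℝ) : Matrix (Fin 2) (Fin 2) ℂ :=
  !![1, 0; 0, (Real.sqrt (1 - p) : ℂ)]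

/-- Kraus operator `M₁` of the amplitude damping channel. -/
noncomputable def M1 (p : ℝ) : Matrix (Fin 2) (Fin 2) ℂ :=
  !![0, (Real.sqrt p : ℂ); 0, 0]

/-- Outer product `|ψ⟩⟨ψ|` of a two-qubit vector. -/
noncomputable def outer (ψ : Q2 → ℂ) : Matrix Q2 Q2 ℂ :=
  Matrix.of fun i j => ψ i * star (ψ j)

/-- The state `ρ(χ, Λ_p)` obtained by applying the amplitude damping channel
with parameter `p` to the second qubit: `Σᵢ (I ⊗ Mᵢ) ρ (I ⊗ Mᵢ)†`. -/
noncomputable def ampDamp (p : ℝ) (ρ : Matrix Q2 Q2 ℂ) : Matrix Q2 Q2 ℂ :=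
  ((1 : Matrix (Fin 2) (Fin 2) ℂ) ⊗ₖ M0 p) * ρ * ((1 : Matrix (Fin 2) (Fin 2) ℂ) ⊗ₖ M0 p)ᴴ +
  ((1 : Matrix (Fin 2) (Fin 2) ℂ) ⊗ₖ M1 p) * ρ * ((1 : Matrix (Fin 2) (Fin 2) ℂ) ⊗ₖ M1 p)ᴴ

/-- The pure state `|χ⟩ = a|00⟩ + b|11⟩`. -/
noncomputable def ketChi (a b : ℝ) : Q2 → ℂ :=
  fun ij => if ij = ((0 : Fin 2), (0 : Fin 2)) then (a : ℂ)
    else if ij = ((1 : Fin 2), (1 : Fin 2)) then (b : ℂ) else 0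

/-- The maximally entangled state `|Φ⁺⟩ = (|00⟩ + |11⟩)/√2`. -/
noncomputable def phiPlus : Q2 → ℂ := ketChi (Real.sqrt 2)⁻¹ (Real.sqrt 2)⁻¹

/-- The optimal transmitted state `|χ₀⟩ = (1/√(2−p))|00⟩ + √((1−p)/(2−p))|11⟩`. -/
noncomputable def ketChi0 (p : ℝ) : Q2 → ℂ :=
  ketChi (Real.sqrt (1 / (2 - p))) (Real.sqrt ((1 - p) / (2 - p)))

/-- Reduced density matrix on the first qubit (trace out the second qubit). -/
noncomputable def trSecond (ρ : Matrix Q2 Q2 ℂ) : Matrix (Fin 2) (Fin 2) ℂ :=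
  Matrix.of fun i k => ∑ j : Fin 2, ρ (i, j) (k, j)

/-- Reduced density matrix on the second qubit (trace out the first qubit). -/
noncomputable def trFirst (ρ : Matrix Q2 Q2 ℂ) : Matrix (Fin 2) (Fin 2) ℂ :=
  Matrix.of fun j l => ∑ i : Fin 2, ρ (i, j) (i, l)

/-- A unit vector `ψ ∈ ℂ²⊗ℂ²` is maximally entangled if both reduced density
matrices of `|ψ⟩⟨ψ|` equal `I/2`. -/
def MaxEnt (ψ : Q2 → ℂ) : Prop :=
  (∑ ij : Q2, Complex.normSq (ψ ij)) = 1 ∧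
  trSecond (outer ψ) = (1 / 2 : ℂ) • (1 : Matrix (Fin 2) (Fin 2) ℂ) ∧
  trFirst (outer ψ) = (1 / 2 : ℂ) • (1 : Matrix (Fin 2) (Fin 2) ℂ)

/-- The real expectation value `⟨ψ|ρ|ψ⟩`. -/
noncomputable def expectation (ψ : Q2 → ℂ) (ρ : Matrix Q2 Q2 ℂ) : ℝ :=
  (∑ i : Q2, ∑ j : Q2, star (ψ i) * ρ i j * ψ j).re

/-- Fidelity (fully entangled fraction): `F(ρ) = sup_Ψ ⟨Ψ|ρ|Ψ⟩` over maximally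
entangled unit vectors `Ψ`. -/
noncomputable def Fid (ρ : Matrix Q2 Q2 ℂ) : ℝ :=
  sSup {x : ℝ | ∃ ψ : Q2 → ℂ, MaxEnt ψ ∧ x = expectation ψ ρ}

/-- Partial transposition on the second qubit: `(ρ^Γ)_{(i,j),(k,l)} = ρ_{(i,l),(k,j)}`. -/
def ptrans (ρ : Matrix Q2 Q2 ℂ) : Matrix Q2 Q2 ℂ :=
  Matrix.of fun ij kl => ρ (ij.1, kl.2) (kl.1, ij.2)

/-- The Verstraete–Verschelde maximum achievable fidelity under trace-preserving LOCC,
as the value of the semidefinite program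
`F*(ρ) = sup { 1/2 − Tr(X ρ^Γ) : X Hermitian, 0 ≤ X ≤ I, −I/2 ≤ X^Γ ≤ I/2 }`. -/
noncomputable def FStar (ρ : Matrix Q2 Q2 ℂ) : ℝ :=
  sSup {x : ℝ | ∃ X : Matrix Q2 Q2 ℂ,
    X.IsHermitian ∧ X.PosSemidef ∧ ((1 : Matrix Q2 Q2 ℂ) - X).PosSemidef ∧
    (ptrans X + (1 / 2 : ℂ) • (1 : Matrix Q2 Q2 ℂ)).PosSemidef ∧
    ((1 / 2 : ℂ) • (1 : Matrix Q2 Q2 ℂ) - ptrans X).PosSemidef ∧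
    x = 1 / 2 - ((X * ptrans ρ).trace).re}

/-- The Pauli matrix `σ_y`. -/
noncomputable def sigY : Matrix (Fin 2) (Fin 2) ℂ := !![0, -Complex.I; Complex.I, 0]

/-- The matrix `ρ (σ_y⊗σ_y) ρ̄ (σ_y⊗σ_y)` whose eigenvalues define the concurrence. -/
noncomputable def Rmat (ρ : Matrix Q2 Q2 ℂ) : Matrix Q2 Q2 ℂ :=
  ρ * (sigY ⊗ₖ sigY) * ρ.map (starRingEnd ℂ) * (sigY ⊗ₖ sigY)

/-- `c` is the concurrence of `ρ`: `c = max(0, λ₁ − λ₂ − λ₃ − λ₄)` where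
`λ₁ ≥ λ₂ ≥ λ₃ ≥ λ₄ ≥ 0` are the square roots of the eigenvalues (with multiplicity)
of `ρ (σ_y⊗σ_y) ρ̄ (σ_y⊗σ_y)`. -/
def IsConcurrence (ρ : Matrix Q2 Q2 ℂ) (c : ℝ) : Prop :=
  ∃ lam : Fin 4 → ℝ,
    (∀ i j : Fin 4, i ≤ j → lam j ≤ lam i) ∧
    (∀ i : Fin 4, 0 ≤ lam i) ∧
    (Rmat ρ).charpoly = ∏ i : Fin 4, (Polynomial.X - Polynomial.C ((lam i : ℂ) ^ 2)) ∧
    c = max 0 (lam 0 - lam 1 - lam 2 - lam 3)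

/-- `μ` is an eigenvalue of the matrix `A`. -/
def IsEigenvalue (A : Matrix Q2 Q2 ℂ) (μ : ℂ) : Prop :=
  ∃ v : Q2 → ℂ, v ≠ 0 ∧ A *ᵥ v = μ • v

/-!
The Kraus operators send `a|00⟩ + b|11⟩` to `a|00⟩ + √(1−p) b|11⟩` and `√p b|10⟩`, so the
expectation of the damped state in `ψ` is `|a ψ₀₀ + √(1−p) b ψ₁₁|² + p b² |ψ₁₀|²`. A maximally
entangled `ψ` has `|ψ₀₀| = |ψ₁₁|` and `|ψ₁₀|² = 1/2 − |ψ₀₀|²`, so for `a, b ≥ 0` the triangle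
inequality bounds this by an affine function of `|ψ₀₀|² ∈ [0, 1/2]`. When
`p b² ≤ (a + √(1−p) b)²` that function is largest at `|ψ₀₀|² = 1/2`, where `Φ⁺` attains it. For
`a = b = 1/√2` the fidelity is therefore `(1 + √(1−p))² / 4`.
-/

lemma mul_outer_mul_conjTranspose (A : Matrix Q2 Q2 ℂ) (χ : Q2 → ℂ) :
    A * outer χ * Aᴴ = outer (A *ᵥ χ) := by
  change A * vecMulVec χ (star χ) * Aᴴ = vecMulVec (A *ᵥ χ) (star (A *ᵥ χ))
  rw [mul_vecMulVec, vecMulVec_mul, star_mulVec]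

lemma ampDamp_outer (p : ℝ) (χ : Q2 → ℂ) :
    ampDamp p (outer χ) =
      outer (((1 : Matrix (Fin 2) (Fin 2) ℂ) ⊗ₖ M0 p) *ᵥ χ) +
        outer (((1 : Matrix (Fin 2) (Fin 2) ℂ) ⊗ₖ M1 p) *ᵥ χ) := by
  simp only [ampDamp, mul_outer_mul_conjTranspose]

lemma one_kronecker_M0_mulVec_ketChi (p a b : ℝ) :
    ((1 : Matrix (Fin 2) (Fin 2) ℂ) ⊗ₖ M0 p) *ᵥ ketChi a b = ketChi a (√(1 - p) * b) := by
  ext ⟨i, j⟩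
  fin_cases i <;> fin_cases j <;>
    simp [mulVec, dotProduct, Fintype.sum_prod_type, kroneckerMap_apply, M0, ketChi]

lemma one_kronecker_M1_mulVec_ketChi (p a b : ℝ) :
    ((1 : Matrix (Fin 2) (Fin 2) ℂ) ⊗ₖ M1 p) *ᵥ ketChi a b =
      Pi.single (1, 0) ((√p * b : ℝ) : ℂ) := by
  ext ⟨i, j⟩
  fin_cases i <;> fin_cases j <;>
    simp [mulVec, dotProduct, Fintype.sum_prod_type, kroneckerMap_apply, M1, ketChi]

lemma expectation_add (ψ : Q2 → ℂ) (ρ σ : Matrix Q2 Q2 ℂ) :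
    expectation ψ (ρ + σ) = expectation ψ ρ + expectation ψ σ := by
  simp only [expectation, Matrix.add_apply, mul_add, add_mul, Finset.sum_add_distrib, add_re]

lemma expectation_outer (ψ χ : Q2 → ℂ) :
    expectation ψ (outer χ) = normSq (star χ ⬝ᵥ ψ) := by
  have factor : ∑ i, ∑ j, star (ψ i) * outer χ i j * ψ j =
      star (star χ ⬝ᵥ ψ) * (star χ ⬝ᵥ ψ) := by
    simp only [dotProduct, star_sum, Finset.sum_mul_sum, outer, of_apply, Pi.star_apply,
      star_mul', star_star]
    exact Finset.sum_congr rfl fun i _ => Finset.sum_congr rfl fun j _ => by ring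
  rw [expectation, factor, star_def, ← normSq_eq_conj_mul_self, ofReal_re]

lemma star_ketChi_dotProduct (a b : ℝ) (ψ : Q2 → ℂ) :
    star (ketChi a b) ⬝ᵥ ψ = a * ψ (0, 0) + b * ψ (1, 1) := by
  simp [dotProduct, Fintype.sum_prod_type, ketChi]

lemma expectation_ampDamp_outer_ketChi {p : ℝ} (hp : 0 ≤ p) (a b : ℝ) (ψ : Q2 → ℂ) :
    expectation ψ (ampDamp p (outer (ketChi a b))) =
      normSq (a * ψ (0, 0) + (√(1 - p) * b : ℝ) * ψ (1, 1)) +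
        p * b ^ 2 * normSq (ψ (1, 0)) := by
  rw [ampDamp_outer, expectation_add, expectation_outer, expectation_outer,
    one_kronecker_M0_mulVec_ketChi, one_kronecker_M1_mulVec_ketChi, star_ketChi_dotProduct,
    ← Pi.single_star, single_dotProduct, star_def, conj_ofReal, normSq_mul, normSq_ofReal,
    ← sq, mul_pow, Real.sq_sqrt hp]

namespace MaxEnt

variable {ψ : Q2 → ℂ}

lemma sum_normSq_row (h : MaxEnt ψ) (i : Fin 2) : ∑ j, normSq (ψ (i, j)) = 1 / 2 := by
  have diag := congrFun₂ h.2.1 i i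
  simp only [trSecond, outer, of_apply, star_def, mul_conj, Matrix.smul_apply, one_apply_eq,
    smul_eq_mul, mul_one] at diag
  apply ofReal_injective
  push_cast
  exact diag

lemma sum_normSq_col (h : MaxEnt ψ) (j : Fin 2) : ∑ i, normSq (ψ (i, j)) = 1 / 2 := by
  have diag := congrFun₂ h.2.2 j j
  simp only [trFirst, outer, of_apply, star_def, mul_conj, Matrix.smul_apply, one_apply_eq,
    smul_eq_mul, mul_one] at diag
  apply ofReal_injective
  push_cast
  exact diag

lemma normSq_one_zero (h : MaxEnt ψ) : normSq (ψ (1, 0)) = 1 / 2 - normSq (ψ (0, 0)) := by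
  have col := h.sum_normSq_col 0
  rw [Fin.sum_univ_two] at col
  linarith

lemma norm_one_one (h : MaxEnt ψ) : ‖ψ (1, 1)‖ = ‖ψ (0, 0)‖ := by
  have row := h.sum_normSq_row 1
  rw [Fin.sum_univ_two, h.normSq_one_zero, normSq_eq_norm_sq, normSq_eq_norm_sq] at row
  exact (sq_eq_sq₀ (norm_nonneg _) (norm_nonneg _)).1 (by linarith)

end MaxEnt

lemma maxEnt_ketChi {a b : ℝ} (ha : a ^ 2 = 1 / 2) (hb : b ^ 2 = 1 / 2) :
    MaxEnt (ketChi a b) := by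
  have ha' : (a : ℂ) * a = 2⁻¹ := by rw [← ofReal_mul, ← sq, ha]; norm_num
  have hb' : (b : ℂ) * b = 2⁻¹ := by rw [← ofReal_mul, ← sq, hb]; norm_num
  refine ⟨?_, ?_, ?_⟩
  · norm_num [ketChi, Fintype.sum_prod_type, normSq_ofReal, ← sq, ha, hb]
  · ext i k
    fin_cases i <;> fin_cases k <;> simp [trSecond, outer, ketChi, ha', hb']
  · ext j l
    fin_cases j <;> fin_cases l <;> simp [trFirst, outer, ketChi, ha', hb']

lemma inv_sqrt_two_sq : (√2)⁻¹ ^ 2 = (1 / 2 : ℝ) := by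
  rw [inv_pow, Real.sq_sqrt zero_le_two, one_div]

lemma maxEnt_phiPlus : MaxEnt phiPlus :=
  maxEnt_ketChi inv_sqrt_two_sq inv_sqrt_two_sq

lemma normSq_mul_add_mul_le {a b : ℝ} (ha : 0 ≤ a) (hb : 0 ≤ b) {z w : ℂ} (hwz : ‖w‖ = ‖z‖) :
    normSq (a * z + b * w) ≤ (a + b) ^ 2 * normSq z := by
  rw [normSq_eq_norm_sq, normSq_eq_norm_sq, ← mul_pow]
  gcongr
  calc ‖a * z + b * w‖ ≤ ‖a * z‖ + ‖b * w‖ := norm_add_le _ _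
    _ = (a + b) * ‖z‖ := by
      rw [norm_mul, norm_mul, norm_real, norm_real, Real.norm_of_nonneg ha, Real.norm_of_nonneg hb,
        hwz, add_mul]

section

variable {p a b : ℝ}

lemma expectation_ampDamp_outer_ketChi_le (hp : 0 ≤ p) (ha : 0 ≤ a) (hb : 0 ≤ b)
    (hpab : p * b ^ 2 ≤ (a + √(1 - p) * b) ^ 2) {ψ : Q2 → ℂ} (hψ : MaxEnt ψ) :
    expectation ψ (ampDamp p (outer (ketChi a b))) ≤ (a + √(1 - p) * b) ^ 2 / 2 := by
  calc expectation ψ (ampDamp p (outer (ketChi a b)))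
      = normSq (a * ψ (0, 0) + (√(1 - p) * b : ℝ) * ψ (1, 1)) +
          p * b ^ 2 * normSq (ψ (1, 0)) := expectation_ampDamp_outer_ketChi hp a b ψ
    _ ≤ (a + √(1 - p) * b) ^ 2 * normSq (ψ (0, 0)) +
          (a + √(1 - p) * b) ^ 2 * normSq (ψ (1, 0)) := by
      gcongr
      · exact normSq_mul_add_mul_le ha (by positivity) hψ.norm_one_one
      · exact normSq_nonneg _
    _ = (a + √(1 - p) * b) ^ 2 / 2 := by rw [hψ.normSq_one_zero]; ring

lemma expectation_phiPlus_ampDamp_outer_ketChi (hp : 0 ≤ p) :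
    expectation phiPlus (ampDamp p (outer (ketChi a b))) = (a + √(1 - p) * b) ^ 2 / 2 := by
  have phiPlus_zero_zero : phiPlus (0, 0) = ((√2)⁻¹ : ℝ) := by simp [phiPlus, ketChi]
  have phiPlus_one_one : phiPlus (1, 1) = ((√2)⁻¹ : ℝ) := by simp [phiPlus, ketChi]
  have phiPlus_one_zero : phiPlus (1, 0) = 0 := by simp [phiPlus, ketChi]
  rw [expectation_ampDamp_outer_ketChi hp, phiPlus_zero_zero, phiPlus_one_one, phiPlus_one_zero,
    ← add_mul, normSq_mul, ← ofReal_add, normSq_ofReal, normSq_ofReal, ← sq, ← sq,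
    inv_sqrt_two_sq, normSq_zero]
  ring

theorem fid_ampDamp_outer_ketChi (hp : 0 ≤ p) (ha : 0 ≤ a) (hb : 0 ≤ b)
    (hpab : p * b ^ 2 ≤ (a + √(1 - p) * b) ^ 2) :
    Fid (ampDamp p (outer (ketChi a b))) = (a + √(1 - p) * b) ^ 2 / 2 := by
  refine IsGreatest.csSup_eq
    ⟨⟨phiPlus, maxEnt_phiPlus, (expectation_phiPlus_ampDamp_outer_ketChi hp).symm⟩, ?_⟩
  rintro _ ⟨ψ, hψ, rfl⟩
  exact expectation_ampDamp_outer_ketChi_le hp ha hb hpab hψ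

theorem fid_ampDamp_outer_phiPlus (hp0 : 0 ≤ p) (hp1 : p ≤ 1) :
    Fid (ampDamp p (outer phiPlus)) = (1 + √(1 - p)) ^ 2 / 4 := by
  have amplitude_sq : ((√2)⁻¹ + √(1 - p) * (√2)⁻¹) ^ 2 = (1 + √(1 - p)) ^ 2 / 2 := by
    rw [← one_add_mul, mul_pow, inv_sqrt_two_sq]
    ring
  have damping_le : p * (√2)⁻¹ ^ 2 ≤ ((√2)⁻¹ + √(1 - p) * (√2)⁻¹) ^ 2 := by
    rw [amplitude_sq, inv_sqrt_two_sq]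
    nlinarith [Real.sqrt_nonneg (1 - p)]
  rw [phiPlus, fid_ampDamp_outer_ketChi hp0 (by positivity) (by positivity) damping_le,
    amplitude_sq]
  ring

end

lemma one_add_sqrt_one_sub_sq_le_two_iff (p : ℝ) :
    (1 + √(1 - p)) ^ 2 ≤ 2 ↔ 2 * (√2 - 1) ≤ p := by
  have one_le_sqrt_two : 1 ≤ √2 := Real.one_le_sqrt.2 one_le_two
  have sqrt_two_sub_one_sq : (√2 - 1) ^ 2 = 3 - 2 * √2 := by
    rw [sub_sq, Real.sq_sqrt zero_le_two]
    ring
  calc (1 + √(1 - p)) ^ 2 ≤ 2 ↔ 1 + √(1 - p) ≤ √2 := (Real.le_sqrt' (by positivity)).symm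
    _ ↔ √(1 - p) ≤ √2 - 1 := le_sub_iff_add_le'.symm
    _ ↔ 1 - p ≤ (√2 - 1) ^ 2 := Real.sqrt_le_left (sub_nonneg.2 one_le_sqrt_two)
    _ ↔ 2 * (√2 - 1) ≤ p := by rw [sqrt_two_sub_one_sq]; constructor <;> intro h <;> linarith

/-- For `0 < p < 1`, the fidelity of `ρ(Φ⁺, Λ_p)` satisfies
`F(ρ(Φ⁺, Λ_p)) ≤ 1/2` if and only if `p ≥ 2(√2 − 1)`. -/
theorem fidelity_phiPlus_le_half_iff (p : ℝ) (hp0 : 0 < p) (hp1 : p < 1) :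
    Fid (ampDamp p (outer phiPlus)) ≤ 1 / 2 ↔ 2 * (Real.sqrt 2 - 1) ≤ p := by
  rw [fid_ampDamp_outer_phiPlus hp0.le hp1.le, ← one_add_sqrt_one_sub_sq_le_two_iff]
  constructor <;> intro h <;> linarith
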